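/- Let {σ,τ} be any of the nine pairs {123,213}, {132,213}, {132,231}, {132,312}, {213,231}, {213,312}, {231,312}, {231,321}, {312,321}. Then the generating function B(z) = Σ_{n≥0} |P_n(σ,τ)| zⁿ for set partitions avoiding both σ and τ equals (2 − 3z + z² − z√(1−6z+z²)) / (2(1 − 3z + 3z²)); equivalently, B(z) satisfies the polynomial identity (2(1−3z+3z²)B(z) − (2−3z+z²))² = z²(1−6z+z²). -/

import Mathlib

/-! ### Patterns of length 3 and 4 as permutations (0-indexed values) -/

def p123 : Equiv.Perm (Fin 3) :=
  ⟨![0,1,2], ![0,1,2], by intro x; fin_cases x <;> rfl, by intro x; fin_cases x <;> rfl⟩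
def p132 : Equiv.Perm (Fin 3) :=
  ⟨![0,2,1], ![0,2,1], by intro x; fin_cases x <;> rfl, by intro x; fin_cases x <;> rfl⟩
def p213 : Equiv.Perm (Fin 3) :=
  ⟨![1,0,2], ![1,0,2], by intro x; fin_cases x <;> rfl, by intro x; fin_cases x <;> rfl⟩
def p231 : Equiv.Perm (Fin 3) :=
  ⟨![1,2,0], ![2,0,1], by intro x; fin_cases x <;> rfl, by intro x; fin_cases x <;> rfl⟩
def p312 : Equiv.Perm (Fin 3) :=
  ⟨![2,0,1], ![1,2,0], by intro x; fin_cases x <;> rfl, by intro x; fin_cases x <;> rfl⟩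
def p321 : Equiv.Perm (Fin 3) :=
  ⟨![2,1,0], ![2,1,0], by intro x; fin_cases x <;> rfl, by intro x; fin_cases x <;> rfl⟩
def p1342 : Equiv.Perm (Fin 4) :=
  ⟨![0,2,3,1], ![0,3,1,2], by intro x; fin_cases x <;> rfl, by intro x; fin_cases x <;> rfl⟩
def p1324 : Equiv.Perm (Fin 4) :=
  ⟨![0,2,1,3], ![0,2,1,3], by intro x; fin_cases x <;> rfl, by intro x; fin_cases x <;> rfl⟩

/-! ### Perfect matchings of `[2n] = {1, …, 2n}` as finsets of pairs `(i,j)`, `i < j` -/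

/-- `M` is a perfect matching of `{1, …, 2n}`. -/
def IsPerfectMatching (n : ℕ) (M : Finset (ℕ × ℕ)) : Prop :=
  (∀ p ∈ M, p.1 < p.2 ∧ 1 ≤ p.1 ∧ p.2 ≤ 2 * n) ∧
  ∀ x, 1 ≤ x → x ≤ 2 * n → ∃! p, p ∈ M ∧ (p.1 = x ∨ p.2 = x)

/-- The matching `M` contains the pattern `τ ∈ S_k`: there are
`i_1 < i_2 < ⋯ < i_{2k}` with `(i_a, i_{2k+1-τ(a)}) ∈ M` for all `1 ≤ a ≤ k`
(written here 0-indexed). -/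
def MatchContains {k : ℕ} (τ : Equiv.Perm (Fin k)) (M : Finset (ℕ × ℕ)) : Prop :=
  ∃ f : Fin (2 * k) → ℕ, StrictMono f ∧
    ∀ a : Fin k,
      (f ⟨a.1, by have := a.isLt; omega⟩,
       f ⟨2 * k - 1 - (τ a).1, by have := (τ a).isLt; omega⟩) ∈ M

def MatchAvoids {k : ℕ} (τ : Equiv.Perm (Fin k)) (M : Finset (ℕ × ℕ)) : Prop :=
  ¬ MatchContains τ M

/-! ### Dyck paths as lists of booleans (`true` = east step, `false` = south step) -/

/-- A Dyck path of semilength `n`, from `(0,n)` to `(n,0)`, staying weakly above `y = n - x`. -/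
def IsDyckPath (n : ℕ) (t : List Bool) : Prop :=
  t.length = 2 * n ∧ t.count true = n ∧
  ∀ i, (t.take i).count false ≤ (t.take i).count true

/-- The height (distance above the diagonal) of the `i`-th vertex of the path `t`. -/
def pathHeight (t : List Bool) (i : ℕ) : ℤ :=
  ((t.take i).count true : ℤ) - ((t.take i).count false : ℤ)

/-- `s` lies weakly below `t` (for paths of the same semilength). -/
def WeaklyBelow (s t : List Bool) : Prop := ∀ i, pathHeight s i ≤ pathHeight t i

/-- The shape of a matching of `[2n]`: an east step for each opener, a south step for
each closer. -/
def shapeOf (n : ℕ) (M : Finset (ℕ × ℕ)) : List Bool :=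
  (List.range (2 * n)).map fun x => decide ((x + 1) ∈ M.image Prod.fst)

/-- Number of returns of a path: south steps ending on the diagonal. -/
def returnsOf (t : List Bool) : ℕ :=
  ((Finset.range t.length).filter fun i =>
    t[i]? = some false ∧ (t.take (i+1)).count true = (t.take (i+1)).count false).card

/-- Height sequence of a path, as natural numbers. -/
def hseq (t : List Bool) (i : ℕ) : ℕ := (t.take i).count true - (t.take i).count false

/-- `η(F)`: the number of indices `0 ≤ i ≤ 2n` with `h_i = 2`. -/
def etaOf (n : ℕ) (t : List Bool) : ℕ :=
  ((Finset.range (2 * n + 1)).filter fun i => hseq t i = 2).card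

/-! ### Full rook placements on Ferrers boards -/

/-- The square in column `c`, row `r` (both 1-indexed from the bottom left) belongs to the
Ferrers board with border path `t ∈ F_n`. -/
def InBoard (n : ℕ) (t : List Bool) (c r : ℕ) : Prop :=
  1 ≤ c ∧ 1 ≤ r ∧ ∃ i, c ≤ (t.take i).count true ∧ (t.take i).count false + r ≤ n

/-- `R` is a full rook placement on the Ferrers board with border path `t ∈ F_n`:
one rook in each of the `n` rows and `n` columns. -/
def IsFullRookPlacement (n : ℕ) (t : List Bool) (R : Finset (ℕ × ℕ)) : Prop :=
  (∀ p ∈ R, InBoard n t p.1 p.2) ∧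
  (∀ c, 1 ≤ c → c ≤ n → ∃! p, p ∈ R ∧ p.1 = c) ∧
  (∀ r, 1 ≤ r → r ≤ n → ∃! p, p ∈ R ∧ p.2 = r)

/-- The rooks of `R` lying in the rectangle `Γ(V_i)` determined by the `i`-th border vertex. -/
def rectRooks (n : ℕ) (t : List Bool) (R : Finset (ℕ × ℕ)) (i : ℕ) : Finset (ℕ × ℕ) :=
  R.filter fun p => p.1 ≤ (t.take i).count true ∧ p.2 + (t.take i).count false ≤ n

/-- Length of the longest increasing sequence (in both coordinates) in a finite point set. -/
def lisLen (S : Finset (ℕ × ℕ)) : ℕ :=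
  (S.powerset.filter fun T => ∀ p ∈ T, ∀ q ∈ T, p.1 < q.1 → p.2 < q.2).sup Finset.card

/-- The full rook placement `R` on the board with border `t ∈ F_n` contains the pattern `τ`:
some rectangle `Γ(V_i)` contains an occurrence of `τ`. -/
def PlacementContains {k : ℕ} (τ : Equiv.Perm (Fin k)) (n : ℕ) (t : List Bool)
    (R : Finset (ℕ × ℕ)) : Prop :=
  ∃ i ≤ 2 * n, ∃ f : Fin k → ℕ × ℕ,
    (∀ a, f a ∈ R ∧ (f a).1 ≤ (t.take i).count true ∧ (f a).2 + (t.take i).count false ≤ n) ∧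
    (∀ a b : Fin k, a < b → (f a).1 < (f b).1) ∧
    (∀ a b : Fin k, τ a < τ b → (f a).2 < (f b).2)

def PlacementAvoids {k : ℕ} (τ : Equiv.Perm (Fin k)) (n : ℕ) (t : List Bool)
    (R : Finset (ℕ × ℕ)) : Prop :=
  ¬ PlacementContains τ n t R

/-- `R` is board-minimal on the board with border `t`: every peak corner square holds a rook. -/
def BoardMinimal (n : ℕ) (t : List Bool) (R : Finset (ℕ × ℕ)) : Prop :=
  ∀ i, t[i]? = some true → t[i+1]? = some false →
    ((t.take (i+1)).count true, n - (t.take (i+1)).count false) ∈ R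

/-- Board-minimal full rook placements on boards of `F_n` avoiding the pattern `σ`,
recorded as pairs (border path, rook set). -/
def MinPlacements (n : ℕ) {k : ℕ} (σ : Equiv.Perm (Fin k)) :
    Set (List Bool × Finset (ℕ × ℕ)) :=
  {tR | IsDyckPath n tR.1 ∧ IsFullRookPlacement n tR.1 tR.2 ∧ BoardMinimal n tR.1 tR.2 ∧
        PlacementAvoids σ n tR.1 tR.2}

/-! ### Pattern avoidance in permutations -/

def PermContains {n k : ℕ} (τ : Equiv.Perm (Fin k)) (π : Equiv.Perm (Fin n)) : Prop :=
  ∃ f : Fin k → Fin n, StrictMono f ∧ ∀ a b : Fin k, τ a < τ b → π (f a) < π (f b)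

def PermAvoids {n k : ℕ} (τ : Equiv.Perm (Fin k)) (π : Equiv.Perm (Fin n)) : Prop :=
  ¬ PermContains τ π

/-- The full rook placement associated to a permutation of `[n]`. -/
def permPlacement {n : ℕ} (π : Equiv.Perm (Fin n)) : Finset (ℕ × ℕ) :=
  Finset.univ.image fun i : Fin n => ((i : ℕ) + 1, (π i : ℕ) + 1)

/-! ### Matchings with fixed points -/

/-- A (not necessarily perfect) matching on `{1, …, m}`: pairwise disjoint pairs. -/
def IsPartialMatching (m : ℕ) (M : Finset (ℕ × ℕ)) : Prop :=
  (∀ p ∈ M, p.1 < p.2 ∧ 1 ≤ p.1 ∧ p.2 ≤ m) ∧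
  ∀ p ∈ M, ∀ q ∈ M, p ≠ q → p.1 ≠ q.1 ∧ p.1 ≠ q.2 ∧ p.2 ≠ q.1 ∧ p.2 ≠ q.2

/-- The fixed points (unmatched vertices) of a matching on `{1, …, m}`. -/
def fixedPts (m : ℕ) (M : Finset (ℕ × ℕ)) : Finset ℕ :=
  (Finset.Icc 1 m).filter fun x => ∀ p ∈ M, p.1 ≠ x ∧ p.2 ≠ x

/-- The matched vertices of a matching on `{1, …, m}`. -/
def matchedSet (m : ℕ) (M : Finset (ℕ × ℕ)) : Finset ℕ :=
  (Finset.Icc 1 m).filter fun x => ∃ p ∈ M, p.1 = x ∨ p.2 = x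

/-- The rank (1-based) of `x` inside the finset `S`. -/
def rankIn (S : Finset ℕ) (x : ℕ) : ℕ := (S.filter (· ≤ x)).card

/-- The matching obtained by removing the fixed points and relabeling increasingly. -/
def relabeled (m : ℕ) (M : Finset (ℕ × ℕ)) : Finset (ℕ × ℕ) :=
  M.image fun p => (rankIn (matchedSet m M) p.1, rankIn (matchedSet m M) p.2)

/-! ### Set partitions -/

/-- `(i,j)` is an arc of the set partition `P` of `{1, …, n}`: `i < j` lie in a common block
with no element of that block strictly between them. -/
def PartArc {n : ℕ} (P : Finpartition (Finset.Icc 1 n)) (i j : ℕ) : Prop :=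
  i < j ∧ ∃ B ∈ P.parts, i ∈ B ∧ j ∈ B ∧ ∀ x ∈ B, ¬(i < x ∧ x < j)

/-- The set partition `P` contains the pattern `τ ∈ S_k`. -/
def PartContains {k n : ℕ} (τ : Equiv.Perm (Fin k)) (P : Finpartition (Finset.Icc 1 n)) : Prop :=
  ∃ f : Fin (2 * k) → ℕ, StrictMono f ∧
    ∀ a : Fin k,
      PartArc P (f ⟨a.1, by have := a.isLt; omega⟩)
        (f ⟨2 * k - 1 - (τ a).1, by have := (τ a).isLt; omega⟩)

def PartAvoids {k n : ℕ} (τ : Equiv.Perm (Fin k)) (P : Finpartition (Finset.Icc 1 n)) : Prop :=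
  ¬ PartContains τ P

/-! ### Counting functions -/

/-- `|M_n(τ)|`: the number of `τ`-avoiding perfect matchings of `[2n]`. -/
noncomputable def mcount {k : ℕ} (τ : Equiv.Perm (Fin k)) (n : ℕ) : ℕ :=
  {M : Finset (ℕ × ℕ) | IsPerfectMatching n M ∧ MatchAvoids τ M}.ncard

/-- `|M_n(σ,τ)|`: the number of perfect matchings of `[2n]` avoiding both `σ` and `τ`. -/
noncomputable def mcount2 {k : ℕ} (σ τ : Equiv.Perm (Fin k)) (n : ℕ) : ℕ :=
  {M : Finset (ℕ × ℕ) | IsPerfectMatching n M ∧ MatchAvoids σ M ∧ MatchAvoids τ M}.ncard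

/-- `|P_n(τ)|`: the number of `τ`-avoiding set partitions of `[n]`. -/
noncomputable def pcount {k : ℕ} (τ : Equiv.Perm (Fin k)) (n : ℕ) : ℕ :=
  Nat.card {P : Finpartition (Finset.Icc 1 n) // PartAvoids τ P}

/-- `|P_n(σ,τ)|`: the number of set partitions of `[n]` avoiding both `σ` and `τ`. -/
noncomputable def pcount2 {k : ℕ} (σ τ : Equiv.Perm (Fin k)) (n : ℕ) : ℕ :=
  Nat.card {P : Finpartition (Finset.Icc 1 n) // PartAvoids σ P ∧ PartAvoids τ P}

/-- `|S_n(τ)|`: the number of `τ`-avoiding permutations of `[n]`. -/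
noncomputable def scount {k : ℕ} (τ : Equiv.Perm (Fin k)) (n : ℕ) : ℕ :=
  Nat.card {π : Equiv.Perm (Fin n) // PermAvoids τ π}

/-- The nine pairs of length-3 patterns in shape-Wilf-equivalence class I. -/
def ClassIPair (σ τ : Equiv.Perm (Fin 3)) : Prop :=
  (σ = p123 ∧ τ = p213) ∨ (σ = p132 ∧ τ = p213) ∨ (σ = p132 ∧ τ = p231) ∨
  (σ = p132 ∧ τ = p312) ∨ (σ = p213 ∧ τ = p231) ∨ (σ = p213 ∧ τ = p312) ∨
  (σ = p231 ∧ τ = p312) ∨ (σ = p231 ∧ τ = p321) ∨ (σ = p312 ∧ τ = p321)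

/-!
An occurrence of a pattern of length `k` in a set partition is a set of `k` arcs that are all open
at one moment of a scan of the vertices from left to right and close in the order prescribed by the
pattern. Record the open arcs by the word of their openers, listed in the order in which the arcs
are going to close: then closing an arc removes the first letter, opening an arc inserts a new
maximum anywhere, and the partition avoids a pattern iff every word of the scan avoids a
corresponding permutation pattern.

Reflecting a partition inverts the patterns, which reduces the nine pairs to six. For each of these,
an avoiding nonempty word has exactly two positions at which a new maximum can be inserted. Hence
the number of ways to continue the scan depends only on the number of open arcs, and it satisfies
the same recursion for all pairs. That recursion is solved by powers of the series `y` with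
`y = z * (1 + y) * (1 + 2 * y)`, namely `y = (S - 1) / 2` for the large Schröder series `S`; its
discriminant is `1 - 6 * z + z ^ 2`.
-/

open Finset

/-! ### Arc diagrams -/

theorem matchContains_iff {k : ℕ} {τ : Equiv.Perm (Fin k)} {A : Finset (ℕ × ℕ)} :
    MatchContains τ A ↔ ∃ o c : Fin k → ℕ, StrictMono o ∧ StrictMono c ∧ (∀ i j, o i < c j) ∧
      ∀ a, (o a, c (τ a).rev) ∈ A := by
  constructor
  · rintro ⟨f, hf, hA⟩
    refine ⟨fun i => f ⟨i, by omega⟩, fun j => f ⟨k + j, by omega⟩, fun i j hij => hf ?_,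
      fun i j hij => hf ?_, fun i j => hf ?_, fun a => ?_⟩
    · simpa using hij
    · simpa using hij
    · simp only [Fin.mk_lt_mk]
      omega
    · convert hA a using 4
      simp only [Fin.val_rev]
      omega
  · rintro ⟨o, c, ho, hc, hoc, hA⟩
    refine ⟨fun i => if h : (i : ℕ) < k then o ⟨i, h⟩ else c ⟨i - k, by omega⟩, ?_, fun a => ?_⟩
    · intro i j hij
      rw [Fin.lt_def] at hij
      dsimp only
      split_ifs with hi hj hj
      · exact ho hij
      · exact hoc _ _
      · omega
      · exact hc (Fin.mk_lt_mk.2 (by omega))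
    · convert hA a using 3
      · simp
      · refine (dif_neg ?_).trans (congrArg c (Fin.ext ?_)) <;> simp only [Fin.val_rev] <;> omega

theorem MatchAvoids.mono {k : ℕ} {τ : Equiv.Perm (Fin k)} {A A' : Finset (ℕ × ℕ)}
    (hA' : MatchAvoids τ A') (hAA' : A ⊆ A') : MatchAvoids τ A :=
  fun ⟨f, hf, hA⟩ => hA' ⟨f, hf, fun a => hAA' (hA a)⟩

/-- `A` is the set of arcs of a diagram on `[n]` in which every vertex opens at most one arc and
closes at most one arc; these are the arc sets of the set partitions of `[n]`. -/
structure IsArcDiagram (n : ℕ) (A : Finset (ℕ × ℕ)) : Prop where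
  lt {x y : ℕ} : (x, y) ∈ A → x < y
  one_le {x y : ℕ} : (x, y) ∈ A → 1 ≤ x
  le {x y : ℕ} : (x, y) ∈ A → y ≤ n
  right_unique {x y z : ℕ} : (x, y) ∈ A → (x, z) ∈ A → y = z
  left_unique {x y z : ℕ} : (x, z) ∈ A → (y, z) ∈ A → x = y

/-- The mirror image of the arc set `A` under `i ↦ n + 1 - i`. -/
def reflectArcs (n : ℕ) (A : Finset (ℕ × ℕ)) : Finset (ℕ × ℕ) :=
  A.image fun p => (n + 1 - p.2, n + 1 - p.1)

namespace IsArcDiagram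

variable {n : ℕ} {A : Finset (ℕ × ℕ)}

theorem mem_reflectArcs_iff (hA : IsArcDiagram n A) {x y : ℕ} :
    (x, y) ∈ reflectArcs n A ↔ 1 ≤ x ∧ x < y ∧ y ≤ n ∧ (n + 1 - y, n + 1 - x) ∈ A := by
  simp only [reflectArcs, mem_image, Prod.exists, Prod.mk.injEq]
  constructor
  · rintro ⟨a, b, hab, rfl, rfl⟩
    have := hA.lt hab
    have := hA.one_le hab
    have := hA.le hab
    refine ⟨by omega, by omega, by omega, ?_⟩
    convert hab using 2 <;> omega
  · rintro ⟨hx, hxy, hy, h⟩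
    exact ⟨_, _, h, by omega, by omega⟩

theorem reflect (hA : IsArcDiagram n A) : IsArcDiagram n (reflectArcs n A) where
  lt h := (hA.mem_reflectArcs_iff.1 h).2.1
  one_le h := (hA.mem_reflectArcs_iff.1 h).1
  le h := (hA.mem_reflectArcs_iff.1 h).2.2.1
  right_unique h h' := by
    obtain ⟨_, _, _, h⟩ := hA.mem_reflectArcs_iff.1 h
    obtain ⟨_, _, _, h'⟩ := hA.mem_reflectArcs_iff.1 h'
    have := hA.left_unique h h'
    omega
  left_unique h h' := by
    obtain ⟨_, _, _, h⟩ := hA.mem_reflectArcs_iff.1 h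
    obtain ⟨_, _, _, h'⟩ := hA.mem_reflectArcs_iff.1 h'
    have := hA.right_unique h h'
    omega

theorem reflectArcs_reflectArcs (hA : IsArcDiagram n A) :
    reflectArcs n (reflectArcs n A) = A := by
  ext ⟨x, y⟩
  rw [hA.reflect.mem_reflectArcs_iff, hA.mem_reflectArcs_iff]
  constructor
  · rintro ⟨hx, hxy, hy, -, -, -, h⟩
    convert h using 2 <;> omega
  · intro h
    have := hA.lt h
    have := hA.one_le h
    have := hA.le h
    refine ⟨by omega, by omega, by omega, by omega, by omega, by omega, ?_⟩
    convert h using 2 <;> omega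

theorem matchContains_inv_reflectArcs (hA : IsArcDiagram n A) {k : ℕ} {τ : Equiv.Perm (Fin k)}
    (h : MatchContains τ A) : MatchContains τ⁻¹ (reflectArcs n A) := by
  obtain ⟨o, c, ho, hc, hoc, hoA⟩ := matchContains_iff.1 h
  have hcn (j : Fin k) : c j ≤ n := by simpa using hA.le (hoA (τ.symm j.rev))
  refine matchContains_iff.2 ⟨fun i => n + 1 - c i.rev, fun j => n + 1 - o j.rev, fun i j hij => ?_,
    fun i j hij => ?_, fun i j => ?_, fun a => ?_⟩
  · have := hc (Fin.rev_lt_rev.2 hij)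
    have := hcn i.rev
    dsimp only
    omega
  · have := ho (Fin.rev_lt_rev.2 hij)
    have := (hoc i.rev i).trans_le (hcn i)
    dsimp only
    omega
  · have := hoc j.rev i.rev
    have := hcn i.rev
    dsimp only
    omega
  · refine mem_image.2 ⟨_, hoA (τ⁻¹ a), ?_⟩
    simp

theorem matchAvoids_inv_reflectArcs (hA : IsArcDiagram n A) {k : ℕ} {τ : Equiv.Perm (Fin k)}
    (h : MatchAvoids τ A) : MatchAvoids τ⁻¹ (reflectArcs n A) := fun h' =>
  h (by simpa [hA.reflectArcs_reflectArcs] using hA.reflect.matchContains_inv_reflectArcs h')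

end IsArcDiagram

/-! ### Arc diagrams of set partitions -/

open Classical in
/-- The set of arcs of the set partition `P`. -/
noncomputable def partArcs {n : ℕ} (P : Finpartition (Icc 1 n)) : Finset (ℕ × ℕ) :=
  {p ∈ range (n + 1) ×ˢ range (n + 1) | PartArc P p.1 p.2}

section partArcs

variable {n : ℕ} {P : Finpartition (Icc 1 n)} {x y : ℕ}

theorem partArc_iff : PartArc P x y ↔
    x < y ∧ x ∈ P.part y ∧ ∀ z ∈ P.part y, x < z → y ≤ z := by
  constructor
  · rintro ⟨hxy, B, hB, hx, hy, h⟩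
    rw [P.part_eq_of_mem hB hy]
    exact ⟨hxy, hx, fun z hz hxz => not_lt.1 fun hzy => h z hz ⟨hxz, hzy⟩⟩
  · rintro ⟨hxy, hx, h⟩
    have hy : y ∈ Icc 1 n := P.part_nonempty.1 ⟨x, hx⟩
    exact ⟨hxy, P.part y, P.part_mem.2 hy, hx, P.mem_part hy,
      fun z hz hxzy => (h z hz hxzy.1).not_gt hxzy.2⟩

theorem mem_part_comm : x ∈ P.part y ↔ y ∈ P.part x := by
  simp only [Finpartition.mem_part_iff_exists, and_comm]

theorem mem_Icc_of_mem_part (h : x ∈ P.part y) : x ∈ Icc 1 n :=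
  P.part_subset y h

theorem part_eq_part_of_mem (h : x ∈ P.part y) : P.part x = P.part y :=
  (P.mem_part_iff_part_eq_part (mem_Icc_of_mem_part h)
    (mem_Icc_of_mem_part (mem_part_comm.1 h))).1 h

theorem mem_partArcs : (x, y) ∈ partArcs P ↔ PartArc P x y := by
  simp only [partArcs, mem_filter, mem_product, mem_range, and_iff_right_iff_imp]
  intro h
  obtain ⟨-, hx, -⟩ := partArc_iff.1 h
  have := mem_Icc.1 (mem_Icc_of_mem_part hx)
  have := mem_Icc.1 (mem_Icc_of_mem_part (mem_part_comm.1 hx))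
  omega

theorem partContains_iff_matchContains_partArcs {k : ℕ} {τ : Equiv.Perm (Fin k)} :
    PartContains τ P ↔ MatchContains τ (partArcs P) := by
  simp only [PartContains, MatchContains, mem_partArcs]

theorem isArcDiagram_partArcs (P : Finpartition (Icc 1 n)) : IsArcDiagram n (partArcs P) where
  lt h := (partArc_iff.1 (mem_partArcs.1 h)).1
  one_le h := (mem_Icc.1 (mem_Icc_of_mem_part (partArc_iff.1 (mem_partArcs.1 h)).2.1)).1
  le h := (mem_Icc.1 (mem_Icc_of_mem_part
    (mem_part_comm.1 (partArc_iff.1 (mem_partArcs.1 h)).2.1))).2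
  right_unique {x y z} hxy hxz := by
    obtain ⟨hlty, hxy, hy⟩ := partArc_iff.1 (mem_partArcs.1 hxy)
    obtain ⟨hltz, hxz, hz⟩ := partArc_iff.1 (mem_partArcs.1 hxz)
    have hpart : P.part y = P.part z :=
      (part_eq_part_of_mem hxy).symm.trans (part_eq_part_of_mem hxz)
    refine (hy z ?_ hltz).antisymm (hz y ?_ hlty)
    · exact hpart ▸ P.mem_part (mem_Icc_of_mem_part (mem_part_comm.1 hxz))
    · exact hpart ▸ P.mem_part (mem_Icc_of_mem_part (mem_part_comm.1 hxy))
  left_unique {x y z} hxz hyz := by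
    obtain ⟨hltx, hxz, hx⟩ := partArc_iff.1 (mem_partArcs.1 hxz)
    obtain ⟨hlty, hyz, hy⟩ := partArc_iff.1 (mem_partArcs.1 hyz)
    by_contra hne
    rcases lt_or_gt_of_ne hne with h | h
    · exact (hx y hyz h).not_gt hlty
    · exact (hy x hxz h).not_gt hltx

end partArcs

/-- `x` and `y` lie on a common path of arcs of `A`. In an arc diagram paths do not branch, so it
is enough to allow monotone paths. -/
def ArcConnected (A : Finset (ℕ × ℕ)) (x y : ℕ) : Prop :=
  Relation.ReflTransGen (fun a b => (a, b) ∈ A) x y ∨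
    Relation.ReflTransGen (fun a b => (a, b) ∈ A) y x

theorem ArcConnected.symm {A : Finset (ℕ × ℕ)} {x y : ℕ} (h : ArcConnected A x y) :
    ArcConnected A y x :=
  Or.symm h

namespace IsArcDiagram

variable {n : ℕ} {A : Finset (ℕ × ℕ)} {x y z : ℕ}

theorem le_of_reflTransGen (hA : IsArcDiagram n A)
    (h : Relation.ReflTransGen (fun a b => (a, b) ∈ A) x y) : x ≤ y := by
  induction h with
  | refl => exact le_rfl
  | tail _ hyz ih => exact ih.trans (hA.lt hyz).le

theorem arcConnected_trans (hA : IsArcDiagram n A) (hxy : ArcConnected A x y)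
    (hyz : ArcConnected A y z) : ArcConnected A x z := by
  rcases hxy with hxy | hyx <;> rcases hyz with hyz | hzy
  · exact Or.inl (hxy.trans hyz)
  · have hleft : Relator.RightUnique (Function.swap fun a b => (a, b) ∈ A) :=
      fun _ _ _ h h' => hA.left_unique h h'
    rw [← Relation.reflTransGen_swap] at hxy hzy
    exact (Relation.ReflTransGen.total_of_right_unique hleft hxy hzy).symm.imp
      Relation.reflTransGen_swap.1 Relation.reflTransGen_swap.1
  · exact Relation.ReflTransGen.total_of_right_unique (fun _ _ _ => hA.right_unique) hyx hyz
  · exact Or.inr (hzy.trans hyx)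

open Classical in
/-- The set partition of `[n]` into the connected components of the arc diagram `A`. -/
noncomputable def toPartition (hA : IsArcDiagram n A) : Finpartition (Icc 1 n) :=
  Finpartition.ofSetSetoid
    ⟨ArcConnected A, fun _ => Or.inl .refl, ArcConnected.symm, hA.arcConnected_trans⟩ (Icc 1 n)

theorem mem_part_toPartition (hA : IsArcDiagram n A) :
    x ∈ hA.toPartition.part y ↔ y ∈ Icc 1 n ∧ x ∈ Icc 1 n ∧ ArcConnected A y x := by
  classical
  exact Finpartition.mem_part_ofSetSetoid_iff_rel _

theorem partArcs_toPartition (hA : IsArcDiagram n A) : partArcs hA.toPartition = A := by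
  ext ⟨x, y⟩
  simp only [mem_partArcs, partArc_iff, hA.mem_part_toPartition]
  constructor
  · rintro ⟨hxy, ⟨hy, -, hyx | hxy'⟩, h⟩
    · exact absurd (hA.le_of_reflTransGen hyx) hxy.not_ge
    · obtain ⟨z, hxz, hzy⟩ := (Relation.ReflTransGen.cases_head hxy').resolve_left hxy.ne
      have hzy' : z ≤ y := hA.le_of_reflTransGen hzy
      have hyz : y ≤ z := by
        refine h z ⟨hy, mem_Icc.2 ⟨?_, hA.le hxz⟩, Or.inr hzy⟩ (hA.lt hxz)
        exact (hA.one_le hxz).trans (hA.lt hxz).le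
      rwa [hyz.antisymm hzy']
  · intro hxy
    have hlt := hA.lt hxy
    have hx := hA.one_le hxy
    have hy := hA.le hxy
    refine ⟨hlt, ⟨mem_Icc.2 ⟨by omega, hy⟩, mem_Icc.2 ⟨hx, by omega⟩, Or.inr (.single hxy)⟩, ?_⟩
    rintro z ⟨-, -, hyz⟩ hxz
    rcases hA.arcConnected_trans (Or.inl (.single hxy)) hyz with hxz' | hzx
    · obtain ⟨w, hxw, hwz⟩ := (Relation.ReflTransGen.cases_head hxz').resolve_left hxz.ne
      rw [hA.right_unique hxy hxw]
      exact hA.le_of_reflTransGen hwz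
    · exact absurd (hA.le_of_reflTransGen hzx) hxz.not_ge

end IsArcDiagram

section partArcs

variable {n : ℕ} {P : Finpartition (Icc 1 n)} {x y : ℕ}

theorem exists_partArc_of_mem_part (hx : x ∈ P.part y) (hxy : x < y) :
    ∃ z, x ≤ z ∧ PartArc P z y := by
  have hne : {z ∈ P.part y | z < y}.Nonempty := ⟨x, mem_filter.2 ⟨hx, hxy⟩⟩
  obtain ⟨hz, hzy⟩ := mem_filter.1 (max'_mem _ hne)
  refine ⟨_, le_max' _ x (mem_filter.2 ⟨hx, hxy⟩), partArc_iff.2 ⟨hzy, hz, fun w hw hzw => ?_⟩⟩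
  by_contra! hwy
  exact (le_max' _ w (mem_filter.2 ⟨hw, hwy⟩)).not_gt hzw

theorem mem_part_iff_reflTransGen (hy : y ∈ Icc 1 n) (hxy : x ≤ y) :
    x ∈ P.part y ↔ Relation.ReflTransGen (fun a b => (a, b) ∈ partArcs P) x y := by
  constructor
  · intro hx
    induction y using Nat.strong_induction_on with
    | _ y ih =>
      rcases hxy.eq_or_lt with rfl | hxy
      · exact .refl
      obtain ⟨z, hxz, hzy⟩ := exists_partArc_of_mem_part hx hxy
      obtain ⟨hlt, hz, -⟩ := partArc_iff.1 hzy
      rw [← part_eq_part_of_mem hz] at hx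
      exact (ih z hlt (mem_Icc_of_mem_part hz) hxz hx).tail (mem_partArcs.2 hzy)
  · intro h
    induction h with
    | refl => exact P.mem_part hy
    | @tail z y hxz hzy ih =>
      obtain ⟨-, hz, -⟩ := partArc_iff.1 (mem_partArcs.1 hzy)
      rw [← part_eq_part_of_mem hz]
      exact ih (mem_Icc_of_mem_part hz) ((isArcDiagram_partArcs P).le_of_reflTransGen hxz)

theorem partArcs_injective : Function.Injective (partArcs (n := n)) := by
  intro P Q hPQ
  have hmem {x y : ℕ} (hx : x ∈ Icc 1 n) (hy : y ∈ Icc 1 n) : x ∈ P.part y ↔ x ∈ Q.part y := by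
    wlog hxy : x ≤ y
    · rw [mem_part_comm, this hPQ hy hx (le_of_not_ge hxy), mem_part_comm]
    rw [mem_part_iff_reflTransGen hy hxy, mem_part_iff_reflTransGen hy hxy, hPQ]
  have hpart {y : ℕ} (hy : y ∈ Icc 1 n) : P.part y = Q.part y := by
    ext x
    exact ⟨fun hx => (hmem (mem_Icc_of_mem_part hx) hy).1 hx,
      fun hx => (hmem (mem_Icc_of_mem_part hx) hy).2 hx⟩
  ext B
  constructor <;> intro hB
  · obtain ⟨x, hx, rfl⟩ := P.part_surjOn hB
    exact hpart hx ▸ Q.part_mem.2 hx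
  · obtain ⟨x, hx, rfl⟩ := Q.part_surjOn hB
    exact hpart hx ▸ P.part_mem.2 hx

end partArcs

theorem pcount2_eq_card_arcDiagrams {k : ℕ} (σ τ : Equiv.Perm (Fin k)) (n : ℕ) :
    pcount2 σ τ n =
      Nat.card {A // IsArcDiagram n A ∧ MatchAvoids σ A ∧ MatchAvoids τ A} := by
  have havoids {ρ : Equiv.Perm (Fin k)} {P : Finpartition (Icc 1 n)} :
      PartAvoids ρ P ↔ MatchAvoids ρ (partArcs P) :=
    not_congr partContains_iff_matchContains_partArcs
  refine Nat.card_congr (Equiv.ofBijective (fun P => ⟨partArcs P.1, isArcDiagram_partArcs P.1,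
    havoids.1 P.2.1, havoids.1 P.2.2⟩) ⟨fun P Q hPQ => ?_, ?_⟩)
  · exact Subtype.ext (partArcs_injective (congrArg Subtype.val hPQ))
  · rintro ⟨A, hA, hσ, hτ⟩
    refine ⟨⟨hA.toPartition, ?_⟩, Subtype.ext hA.partArcs_toPartition⟩
    rw [havoids, havoids, hA.partArcs_toPartition]
    exact ⟨hσ, hτ⟩

theorem pcount2_inv {k : ℕ} (σ τ : Equiv.Perm (Fin k)) (n : ℕ) :
    pcount2 σ⁻¹ τ⁻¹ n = pcount2 σ τ n := by
  rw [pcount2_eq_card_arcDiagrams, pcount2_eq_card_arcDiagrams]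
  refine Nat.card_congr
    { toFun := fun A => ⟨reflectArcs n A.1, A.2.1.reflect, ?_, ?_⟩
      invFun := fun A => ⟨reflectArcs n A.1, A.2.1.reflect,
        A.2.1.matchAvoids_inv_reflectArcs A.2.2.1, A.2.1.matchAvoids_inv_reflectArcs A.2.2.2⟩
      left_inv := fun A => Subtype.ext A.2.1.reflectArcs_reflectArcs
      right_inv := fun A => Subtype.ext A.2.1.reflectArcs_reflectArcs }
  · simpa using A.2.1.matchAvoids_inv_reflectArcs A.2.2.1
  · simpa using A.2.1.matchAvoids_inv_reflectArcs A.2.2.2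

/-! ### Scanning an arc diagram -/

/-- The list `w` contains a subsequence order isomorphic to the reverse of the word of `τ⁻¹`. An
occurrence of `τ` in an arc diagram is such a subsequence among the arcs that are open at some
moment, listed by their openers in the order in which they close. -/
def ListContains {k : ℕ} (τ : Equiv.Perm (Fin k)) (w : List ℕ) : Prop :=
  ∃ f : Fin k → ℕ, StrictMono f ∧ (List.ofFn fun j => f (τ.symm j.rev)).Sublist w

/-- Pattern avoidance for lists, see `ListContains`. -/
def ListAvoids {k : ℕ} (τ : Equiv.Perm (Fin k)) (w : List ℕ) : Prop :=
  ¬ ListContains τ w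

section ListAvoids

variable {k : ℕ} {τ : Equiv.Perm (Fin k)}

theorem ListAvoids.sublist {w w' : List ℕ} (hw' : ListAvoids τ w') (h : w.Sublist w') :
    ListAvoids τ w :=
  fun ⟨f, hf, hw⟩ => hw' ⟨f, hf, hw.trans h⟩

theorem listAvoids_nil [NeZero k] : ListAvoids τ [] := by
  rintro ⟨f, -, hf⟩
  exact NeZero.ne k (List.ofFn_eq_nil_iff.1 (List.sublist_nil.1 hf))

end ListAvoids

/-- `x` and `y` open arcs of `A`, and the arc of `x` closes first. -/
def ClosesBefore (A : Finset (ℕ × ℕ)) (x y : ℕ) : Prop :=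
  ∃ c d, (x, c) ∈ A ∧ (y, d) ∈ A ∧ c < d

/-- `A` consists of the arcs that remain to be closed when an arc diagram on `[n]` is scanned from
left to right: the openers up to `s` and the closers up to `t` have been read, and `w` lists the
openers of the arcs that are currently open, in the order in which they will be closed. -/
structure IsCompletion (n s t : ℕ) (w : List ℕ) (A : Finset (ℕ × ℕ)) : Prop where
  lt {x y : ℕ} : (x, y) ∈ A → x < y
  lt_closer {x y : ℕ} : (x, y) ∈ A → t < y
  closer_le {x y : ℕ} : (x, y) ∈ A → y ≤ n
  opener {x y : ℕ} : (x, y) ∈ A → s < x ∨ x ∈ w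
  right_unique {x y z : ℕ} : (x, y) ∈ A → (x, z) ∈ A → y = z
  left_unique {x y z : ℕ} : (x, z) ∈ A → (y, z) ∈ A → x = y
  exists_closer {x : ℕ} : x ∈ w → ∃ y, (x, y) ∈ A
  closing_order : w.Pairwise (ClosesBefore A)

theorem isCompletion_zero_iff {n : ℕ} {A : Finset (ℕ × ℕ)} :
    IsCompletion n 0 0 [] A ↔ IsArcDiagram n A where
  mp h := ⟨h.lt, fun hxy => (h.opener hxy).resolve_right List.not_mem_nil, h.closer_le,
    h.right_unique, h.left_unique⟩
  mpr h := ⟨h.lt, fun hxy => (Nat.zero_le _).trans_lt (h.lt hxy), h.le,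
    fun hxy => Or.inl (h.one_le hxy), h.right_unique, h.left_unique, by simp, .nil⟩

namespace IsCompletion

variable {n s t : ℕ} {w : List ℕ} {A : Finset (ℕ × ℕ)}

theorem closesBefore_trans (h : IsCompletion n s t w A) : IsTrans ℕ (ClosesBefore A) where
  trans := by
    rintro x y z ⟨c, d, hc, hd, hcd⟩ ⟨d', e, hd', he, hde⟩
    obtain rfl := h.right_unique hd hd'
    exact ⟨c, e, hc, he, hcd.trans hde⟩

theorem closesBefore_irrefl (h : IsCompletion n s t w A) : Std.Irrefl (ClosesBefore A) where
  irrefl := by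
    rintro x ⟨c, d, hc, hd, hcd⟩
    exact hcd.ne (h.right_unique hc hd)

theorem closesBefore_antisymm (h : IsCompletion n s t w A) : Std.Antisymm (ClosesBefore A) where
  antisymm x y hxy hyx :=
    absurd (h.closesBefore_trans.trans x y x hxy hyx) (h.closesBefore_irrefl.irrefl x)

theorem closesBefore_or_closesBefore (h : IsCompletion n s t w A) {x y c d : ℕ} (hxy : x ≠ y)
    (hx : (x, c) ∈ A) (hy : (y, d) ∈ A) : ClosesBefore A x y ∨ ClosesBefore A y x := by
  have hcd : c ≠ d := fun hcd => hxy (h.left_unique hx (hcd ▸ hy))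
  rcases hcd.lt_or_gt with hcd | hdc
  · exact Or.inl ⟨c, d, hx, hy, hcd⟩
  · exact Or.inr ⟨d, c, hy, hx, hdc⟩

variable {k : ℕ} {τ : Equiv.Perm (Fin k)}

theorem matchContains_of_listContains (h : IsCompletion n s t w A) (hw : ∀ x ∈ w, x ≤ t)
    (hτ : ListContains τ w) : MatchContains τ A := by
  obtain ⟨f, hf, hsub⟩ := hτ
  have hfw (j : Fin k) : f (τ.symm j.rev) ∈ w := hsub.subset (List.mem_ofFn.2 ⟨j, rfl⟩)
  choose c hc using fun j => h.exists_closer (hfw j)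
  refine matchContains_iff.2 ⟨f, c, hf, fun i j hij => ?_, fun i j => ?_, fun a => ?_⟩
  · obtain ⟨c', d', hc', hd', hcd⟩ := List.pairwise_ofFn.1 (h.closing_order.sublist hsub) hij
    rwa [h.right_unique (hc i) hc', h.right_unique (hc j) hd']
  · have hfi : f i ∈ w := by simpa using hfw (τ i).rev
    exact (hw _ hfi).trans_lt (h.lt_closer (hc j))
  · simpa using hc (τ a).rev

theorem listContains_of_forall_mem (h : IsCompletion n s t w A) {o c : Fin k → ℕ}
    (ho : StrictMono o) (hc : StrictMono c) (hA : ∀ a, (o a, c (τ a).rev) ∈ A)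
    (hw : ∀ a, o a ∈ w) : ListContains τ w := by
  have hirrefl := h.closesBefore_irrefl
  have hantisymm := h.closesBefore_antisymm
  have horder : (List.ofFn fun j => o (τ.symm j.rev)).Pairwise (ClosesBefore A) :=
    List.pairwise_ofFn.2 fun i j hij => ⟨c i, c j, by simpa using hA (τ.symm i.rev),
      by simpa using hA (τ.symm j.rev), hc hij⟩
  have hsubset : (List.ofFn fun j => o (τ.symm j.rev)) ⊆ w := by
    simp [List.subset_def, List.mem_ofFn, hw]
  exact ⟨o, ho, List.sublist_of_subperm_of_pairwise (horder.nodup.subperm hsubset) horder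
    h.closing_order⟩

end IsCompletion

namespace IsCompletion

variable {n s t x : ℕ} {w : List ℕ} {A : Finset (ℕ × ℕ)}

theorem head?_eq_of_mem (h : IsCompletion n s s w A) (hx : (x, s + 1) ∈ A) :
    w.head? = some x := by
  have hxw : x ∈ w := (h.opener hx).resolve_left fun hsx => by have := h.lt hx; omega
  cases w with
  | nil => exact absurd hxw List.not_mem_nil
  | cons y w =>
    rcases List.mem_cons.1 hxw with rfl | hxw
    · rfl
    · obtain ⟨c, d, hc, hd, hcd⟩ := List.rel_of_pairwise_cons h.closing_order hxw
      have := h.right_unique hd hx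
      have := h.lt_closer hc
      omega

theorem succ_closer_iff :
    IsCompletion n s (s + 1) w A ↔ IsCompletion n s s w A ∧ ∀ x ∈ w.head?, (x, s + 1) ∉ A where
  mp h := ⟨{ h with lt_closer := fun hxy => (Nat.lt_succ_self s).trans (h.lt_closer hxy) },
    fun _ _ hx => (h.lt_closer hx).ne rfl⟩
  mpr := by
    rintro ⟨h, hhead⟩
    refine { h with lt_closer := fun {x y} hxy => ?_ }
    refine lt_of_le_of_ne (h.lt_closer hxy) ?_
    rintro rfl
    exact hhead x (h.head?_eq_of_mem hxy) hxy

theorem tail_erase (h : IsCompletion n s s (x :: w) A) (hx : (x, s + 1) ∈ A) :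
    IsCompletion n s (s + 1) w (A.erase (x, s + 1)) := by
  have herase {y z : ℕ} (hyz : (y, z) ∈ A) (hne : y ≠ x) : (y, z) ∈ A.erase (x, s + 1) :=
    mem_erase.2 ⟨fun h => hne (congrArg Prod.fst h), hyz⟩
  have hxw : x ∉ w := by
    have := h.closesBefore_irrefl
    exact (List.nodup_cons.1 h.closing_order.nodup).1
  have hne {y : ℕ} (hy : y ∈ w) : y ≠ x := fun hyx => hxw (hyx ▸ hy)
  constructor
  case lt => grind [→ h.lt]
  case lt_closer => grind [→ h.lt_closer, → h.left_unique]
  case closer_le => grind [→ h.closer_le]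
  case opener => grind [→ h.opener, → h.right_unique]
  case right_unique => grind [→ h.right_unique]
  case left_unique => grind [→ h.left_unique]
  case exists_closer =>
    intro y hy
    obtain ⟨z, hyz⟩ := h.exists_closer (List.mem_cons_of_mem x hy)
    exact ⟨z, herase hyz (hne hy)⟩
  case closing_order =>
    refine (List.pairwise_cons.1 h.closing_order).2.imp_of_mem ?_
    rintro y z hy hz ⟨c, d, hc, hd, hcd⟩
    exact ⟨c, d, herase hc (hne hy), herase hd (hne hz), hcd⟩

theorem cons_insert (h : IsCompletion n s (s + 1) w A) (hx : x ≤ s) (hxw : x ∉ w) (hs : s + 1 ≤ n) :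
    IsCompletion n s s (x :: w) (insert (x, s + 1) A) := by
  constructor
  case lt => grind [→ h.lt]
  case lt_closer => grind [→ h.lt_closer]
  case closer_le => grind [→ h.closer_le]
  case opener => grind [→ h.opener]
  case right_unique => grind [→ h.opener, → h.right_unique]
  case left_unique => grind [→ h.lt_closer, → h.left_unique]
  case exists_closer => grind [→ h.exists_closer]
  case closing_order =>
    refine List.pairwise_cons.2 ⟨fun y hy => ?_, h.closing_order.imp ?_⟩
    · obtain ⟨z, hyz⟩ := h.exists_closer hy
      exact ⟨s + 1, z, mem_insert_self _ _, mem_insert_of_mem hyz, h.lt_closer hyz⟩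
    · rintro y z ⟨c, d, hc, hd, hcd⟩
      exact ⟨c, d, mem_insert_of_mem hc, mem_insert_of_mem hd, hcd⟩

variable {k : ℕ} {τ : Equiv.Perm (Fin k)}

theorem matchAvoids_insert (h : IsCompletion n s s (x :: w) (insert (x, s + 1) A))
    (hτ : ListAvoids τ (x :: w)) (hA : MatchAvoids τ A) :
    MatchAvoids τ (insert (x, s + 1) A) := by
  intro hcontains
  obtain ⟨o, c, ho, hc, hoc, harc⟩ := matchContains_iff.1 hcontains
  by_cases hused : ∃ a, (o a, c (τ a).rev) = (x, s + 1)
  · obtain ⟨a, ha⟩ := hused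
    refine hτ (h.listContains_of_forall_mem ho hc harc fun b => ?_)
    have : o b < s + 1 := (Prod.mk.inj ha).2 ▸ hoc b _
    exact (h.opener (harc b)).resolve_left (by omega)
  · push Not at hused
    exact hA (matchContains_iff.2
      ⟨o, c, ho, hc, hoc, fun a => (mem_insert.1 (harc a)).resolve_left (hused a)⟩)

theorem listAvoids (h : IsCompletion n s t w A) (hw : ∀ x ∈ w, x ≤ t) (hA : MatchAvoids τ A) :
    ListAvoids τ w :=
  fun hτ => hA (h.matchContains_of_listContains hw hτ)

end IsCompletion

section insertIdx

variable {α : Type*} {r : α → α → Prop} {w : List α} {a : α}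

theorem exists_pairwise_insertIdx [IsTrans α r] (hw : w.Pairwise r) (ha : ∀ x ∈ w, r x a ∨ r a x) :
    ∃ p ≤ w.length, (w.insertIdx p a).Pairwise r := by
  induction w with
  | nil => exact ⟨0, le_rfl, by simp⟩
  | cons x w ih =>
    obtain ⟨hx, hw'⟩ := List.pairwise_cons.1 hw
    rcases ha x List.mem_cons_self with hxa | hax
    · obtain ⟨p, hp, hpw⟩ := ih hw' fun y hy => ha y (List.mem_cons_of_mem x hy)
      refine ⟨p + 1, Nat.succ_le_succ hp, List.pairwise_cons.2 ⟨fun y hy => ?_, hpw⟩⟩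
      rcases List.eq_or_mem_of_mem_insertIdx hy with rfl | hy
      · exact hxa
      · exact hx y hy
    · refine ⟨0, Nat.zero_le _, List.pairwise_cons.2 ⟨fun y hy => ?_, hw⟩⟩
      rcases List.mem_cons.1 hy with rfl | hy
      · exact hax
      · exact _root_.trans hax (hx y hy)

theorem eq_of_pairwise_insertIdx [Std.Irrefl r] [Std.Antisymm r] {p q : ℕ} (ha : a ∉ w)
    (hp : p ≤ w.length) (hq : q ≤ w.length) (hpw : (w.insertIdx p a).Pairwise r)
    (hqw : (w.insertIdx q a).Pairwise r) : p = q :=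
  List.injOn_insertIdx_index_of_notMem w a ha hp hq <|
    hpw.eq_of_mem_iff hqw fun x => by rw [List.mem_insertIdx hp, List.mem_insertIdx hq]

end insertIdx

namespace IsCompletion

variable {n s t p : ℕ} {w : List ℕ} {A : Finset (ℕ × ℕ)}

theorem of_insertIdx (hp : p ≤ w.length)
    (h : IsCompletion n (s + 1) t (w.insertIdx p (s + 1)) A) : IsCompletion n s t w A :=
  { h with
    opener := fun hxy => by
      rcases h.opener hxy with hx | hx
      · exact Or.inl (by omega)
      · exact ((List.mem_insertIdx hp).1 hx).imp_left fun hx => by omega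
    exists_closer := fun hx => h.exists_closer ((List.mem_insertIdx hp).2 (Or.inr hx))
    closing_order := h.closing_order.sublist (List.sublist_insertIdx w p _) }

theorem of_succ_opener (h : IsCompletion n (s + 1) t w A) : IsCompletion n s t w A :=
  { h with opener := fun hxy => (h.opener hxy).imp_left (Nat.lt_succ_self s).trans }

theorem succ_opener_or_exists_insertIdx (h : IsCompletion n s t w A) (hs : s + 1 ∉ w) :
    IsCompletion n (s + 1) t w A ∨
      ∃ p ≤ w.length, IsCompletion n (s + 1) t (w.insertIdx p (s + 1)) A := by
  by_cases hopen : ∃ y, (s + 1, y) ∈ A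
  · obtain ⟨y, hy⟩ := hopen
    have htrans := h.closesBefore_trans
    obtain ⟨p, hp, hpw⟩ := exists_pairwise_insertIdx h.closing_order (a := s + 1) fun x hx => by
      obtain ⟨z, hz⟩ := h.exists_closer hx
      exact h.closesBefore_or_closesBefore (fun hxs => hs (hxs ▸ hx)) hz hy
    refine Or.inr ⟨p, hp, { h with opener := ?_, exists_closer := ?_, closing_order := hpw }⟩
    · intro x z hxz
      rw [List.mem_insertIdx hp]
      rcases h.opener hxz with hsx | hxw
      · exact (Nat.eq_or_lt_of_le hsx).symm.imp_right fun hx => Or.inl hx.symm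
      · exact Or.inr (Or.inr hxw)
    · intro x hx
      rcases (List.mem_insertIdx hp).1 hx with rfl | hx
      · exact ⟨y, hy⟩
      · exact h.exists_closer hx
  · refine Or.inl { h with opener := fun {x y} hxy => (h.opener hxy).imp_left fun hsx => ?_ }
    exact lt_of_le_of_ne hsx fun hsx => hopen ⟨y, hsx ▸ hxy⟩

end IsCompletion

/-! ### Counting completions -/

open Classical in
/-- The completions of the state `(s, t, w)`, see `IsCompletion`, that avoid `σ` and `τ`. -/
noncomputable def completions {k : ℕ} (σ τ : Equiv.Perm (Fin k)) (n s t : ℕ) (w : List ℕ) :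
    Finset (Finset (ℕ × ℕ)) :=
  {A ∈ (range (n + 1) ×ˢ range (n + 1)).powerset |
    IsCompletion n s t w A ∧ MatchAvoids σ A ∧ MatchAvoids τ A}

section completions

variable {k : ℕ} {σ τ : Equiv.Perm (Fin k)} {n s t x : ℕ} {w : List ℕ} {A : Finset (ℕ × ℕ)}

theorem mem_completions : A ∈ completions σ τ n s t w ↔
    IsCompletion n s t w A ∧ MatchAvoids σ A ∧ MatchAvoids τ A := by
  simp only [completions, mem_filter, mem_powerset, and_iff_right_iff_imp]
  rintro ⟨hA, -⟩ ⟨x, y⟩ hxy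
  have := hA.lt hxy
  have := hA.closer_le hxy
  exact mem_product.2 ⟨mem_range.2 (by omega), mem_range.2 (by omega)⟩

theorem pcount2_eq_card_completions : pcount2 σ τ n = #(completions σ τ n 0 0 []) := by
  rw [pcount2_eq_card_arcDiagrams]
  exact Nat.subtype_card _ fun A => by rw [mem_completions, isCompletion_zero_iff]

theorem completions_eq_empty (hw : ∀ x ∈ w, x ≤ t) (h : ¬(ListAvoids σ w ∧ ListAvoids τ w)) :
    completions σ τ n s t w = ∅ := by
  refine eq_empty_of_forall_notMem fun A hA => ?_
  obtain ⟨hA, hσ, hτ⟩ := mem_completions.1 hA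
  exact h ⟨hA.listAvoids hw hσ, hA.listAvoids hw hτ⟩

theorem completions_self_nil [NeZero k] : completions σ τ n n n [] = {∅} := by
  have havoids {ρ : Equiv.Perm (Fin k)} : MatchAvoids ρ ∅ := fun ⟨_, _, hf⟩ =>
    notMem_empty _ (hf 0)
  ext A
  rw [mem_completions, mem_singleton]
  constructor
  · rintro ⟨hA, -⟩
    exact eq_empty_of_forall_notMem fun p hp => (hA.lt_closer hp).not_ge (hA.closer_le hp)
  · rintro rfl
    exact ⟨by constructor <;> simp, havoids, havoids⟩

theorem completions_self_cons : completions σ τ n n n (x :: w) = ∅ := by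
  refine eq_empty_of_forall_notMem fun A hA => ?_
  have hA := (mem_completions.1 hA).1
  obtain ⟨y, hy⟩ := hA.exists_closer List.mem_cons_self
  exact (hA.lt_closer hy).not_ge (hA.closer_le hy)

theorem completions_nil_closing : completions σ τ n s s [] = completions σ τ n s (s + 1) [] := by
  ext A
  simp [mem_completions, IsCompletion.succ_closer_iff]

theorem card_completions_cons_closing (hs : s + 1 ≤ n) (hx : x ≤ s) (hxw : x ∉ w)
    (hσ : ListAvoids σ (x :: w)) (hτ : ListAvoids τ (x :: w)) :
    #(completions σ τ n s s (x :: w)) =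
      #(completions σ τ n s (s + 1) (x :: w)) + #(completions σ τ n s (s + 1) w) := by
  rw [← card_filter_add_card_filter_not (fun A => (x, s + 1) ∉ A)]
  congr 1
  · congr 1
    ext A
    simp only [mem_filter, mem_completions, IsCompletion.succ_closer_iff, List.head?_cons,
      Option.mem_some_iff, forall_eq']
    tauto
  · simp only [not_not]
    refine card_nbij' (·.erase (x, s + 1)) (insert (x, s + 1) ·) ?_ ?_ ?_ ?_
    · intro A hA
      obtain ⟨hA, hxA⟩ := mem_filter.1 hA
      obtain ⟨hA, hσA, hτA⟩ := mem_completions.1 hA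
      exact mem_completions.2 ⟨hA.tail_erase hxA, hσA.mono (erase_subset _ _),
        hτA.mono (erase_subset _ _)⟩
    · intro A hA
      obtain ⟨hA, hσA, hτA⟩ := mem_completions.1 hA
      have hA' := hA.cons_insert hx hxw hs
      exact mem_filter.2 ⟨mem_completions.2 ⟨hA', hA'.matchAvoids_insert hσ hσA,
        hA'.matchAvoids_insert hτ hτA⟩, mem_insert_self _ _⟩
    · intro A hA
      exact insert_erase (mem_filter.1 hA).2
    · intro A hA
      exact erase_insert fun hxA => ((mem_completions.1 hA).1.lt_closer hxA).false

theorem card_completions_opening (hs : s + 1 ∉ w) :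
    #(completions σ τ n s t w) = #(completions σ τ n (s + 1) t w) +
      ∑ p ∈ range (w.length + 1), #(completions σ τ n (s + 1) t (w.insertIdx p (s + 1))) := by
  classical
  have hle {p : ℕ} (hp : p ∈ (range (w.length + 1) : Set ℕ)) : p ≤ w.length :=
    Nat.lt_succ_iff.1 (mem_range.1 hp)
  rw [← card_biUnion, ← card_union_of_disjoint]
  · congr 1
    ext A
    simp only [mem_union, mem_biUnion, mem_completions, mem_range, Nat.lt_succ_iff]
    constructor
    · rintro ⟨hA, hav⟩
      exact (hA.succ_opener_or_exists_insertIdx hs).imp (⟨·, hav⟩)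
        fun ⟨p, hp, hA⟩ => ⟨p, hp, hA, hav⟩
    · rintro (⟨hA, hav⟩ | ⟨p, hp, hA, hav⟩)
      · exact ⟨hA.of_succ_opener, hav⟩
      · exact ⟨hA.of_insertIdx hp, hav⟩
  · simp only [disjoint_left, mem_biUnion, not_exists, not_and, mem_completions]
    rintro A ⟨hA, -⟩ p hp hA' - -
    obtain ⟨y, hy⟩ := hA'.exists_closer ((List.mem_insertIdx (hle hp)).2 (Or.inl rfl))
    exact hs ((hA.opener hy).resolve_left (lt_irrefl _))
  · intro p hp q hq hpq
    refine disjoint_left.2 fun A hAp hAq => hpq ?_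
    have hAp := (mem_completions.1 hAp).1
    have := hAp.closesBefore_irrefl
    have := hAp.closesBefore_antisymm
    exact eq_of_pairwise_insertIdx hs (hle hp) (hle hq) hAp.closing_order
      (mem_completions.1 hAq).1.closing_order

end completions

/-- The number of active sites of a list of length `m`, see `HasTwoActiveSites`. -/
def siteCount : ℕ → ℕ
  | 0 => 1
  | _ + 1 => 2

open Classical in
/-- The positions at which `a` can be inserted into `w` without creating `σ` or `τ`. -/
noncomputable def activeSites {k : ℕ} (σ τ : Equiv.Perm (Fin k)) (w : List ℕ) (a : ℕ) : Finset ℕ :=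
  {p ∈ range (w.length + 1) |
    ListAvoids σ (w.insertIdx p a) ∧ ListAvoids τ (w.insertIdx p a)}

/-- Into a list that avoids `σ` and `τ`, a new maximum can be inserted without creating `σ` or `τ`
at exactly two positions, or at the only position if the list is empty. -/
def HasTwoActiveSites {k : ℕ} (σ τ : Equiv.Perm (Fin k)) : Prop :=
  ∀ (w : List ℕ) (a : ℕ), w.Nodup → (∀ x ∈ w, x < a) → ListAvoids σ w → ListAvoids τ w →
    #(activeSites σ τ w a) = siteCount w.length

/-- The number of ways to complete, in `N` further vertices, a diagram with `m` open arcs, when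
an arc can always be opened in `siteCount` ways. The two summands for a positive number of open
arcs are the cases in which the next vertex does not close, respectively closes, an arc. -/
def weight : ℕ → ℕ → ℕ
  | 0, 0 => 1
  | 0, _ + 1 => 0
  | N + 1, 0 => weight N 0 + siteCount 0 * weight N 1
  | N + 1, m + 1 => (weight N (m + 1) + siteCount (m + 1) * weight N (m + 2)) +
      (weight N m + siteCount m * weight N (m + 1))

namespace HasTwoActiveSites

variable {k : ℕ} {σ τ : Equiv.Perm (Fin k)} {n s t : ℕ} {w : List ℕ}

theorem card_completions_succ_closer (h : HasTwoActiveSites σ τ) {f : ℕ → ℕ}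
    (hf : ∀ w : List ℕ, w.Nodup → (∀ x ∈ w, x ≤ s + 1) → ListAvoids σ w → ListAvoids τ w →
      #(completions σ τ n (s + 1) (s + 1) w) = f w.length)
    (hw : w.Nodup) (hws : ∀ x ∈ w, x ≤ s) (hσ : ListAvoids σ w) (hτ : ListAvoids τ w) :
    #(completions σ τ n s (s + 1) w) = f w.length + siteCount w.length * f (w.length + 1) := by
  have hsw : s + 1 ∉ w := fun hsw => (hws _ hsw).not_gt s.lt_succ_self
  have hinsert {p : ℕ} (hp : p ≤ w.length) : ∀ x ∈ w.insertIdx p (s + 1), x ≤ s + 1 := by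
    intro x hx
    rcases (List.mem_insertIdx hp).1 hx with rfl | hx
    · exact le_rfl
    · exact (hws x hx).trans s.le_succ
  have hsites : ∑ p ∈ activeSites σ τ w (s + 1),
      #(completions σ τ n (s + 1) (s + 1) (w.insertIdx p (s + 1))) =
      ∑ p ∈ range (w.length + 1),
        #(completions σ τ n (s + 1) (s + 1) (w.insertIdx p (s + 1))) := by
    classical
    refine sum_filter_of_ne fun p hp hne => ?_
    contrapose! hne
    rw [completions_eq_empty (hinsert (Nat.lt_succ_iff.1 (mem_range.1 hp))) (by tauto), card_empty]
  rw [card_completions_opening hsw, ← hsites,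
    hf w hw (fun x hx => (hws x hx).trans s.le_succ) hσ hτ,
    ← h w (s + 1) hw (fun x hx => Nat.lt_succ_of_le (hws x hx)) hσ hτ, ← smul_eq_mul]
  refine congrArg _ (sum_eq_card_nsmul fun p hp => ?_)
  simp only [activeSites, mem_filter, mem_range, Nat.lt_succ_iff] at hp
  obtain ⟨hp, hσp, hτp⟩ := hp
  rw [hf _ ?_ (hinsert hp) hσp hτp, List.length_insertIdx_of_le_length hp]
  exact (List.perm_insertIdx _ _ hp).nodup_iff.2 (List.nodup_cons.2 ⟨hsw, hw⟩)

theorem card_completions [NeZero k] (h : HasTwoActiveSites σ τ) (N : ℕ) (hn : s + N = n)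
    (hw : w.Nodup) (hws : ∀ x ∈ w, x ≤ s) (hσ : ListAvoids σ w) (hτ : ListAvoids τ w) :
    #(completions σ τ n s s w) = weight N w.length := by
  induction N generalizing s w with
  | zero =>
    obtain rfl : s = n := hn
    cases w with
    | nil => rw [completions_self_nil]; rfl
    | cons x w => rw [completions_self_cons]; rfl
  | succ N ih =>
    have hopen {w : List ℕ} := h.card_completions_succ_closer (w := w) (f := weight N)
      fun w => ih (s := s + 1) (w := w) (by omega)
    cases w with
    | nil => rw [completions_nil_closing, hopen hw hws hσ hτ]; rfl
    | cons x w =>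
      obtain ⟨hxw, hw'⟩ := List.nodup_cons.1 hw
      obtain ⟨hxs, hws'⟩ := List.forall_mem_cons.1 hws
      rw [card_completions_cons_closing (by omega) hxs hxw hσ hτ, hopen hw hws hσ hτ,
        hopen hw' hws' (hσ.sublist (List.sublist_cons_self x w))
          (hτ.sublist (List.sublist_cons_self x w))]
      rfl

theorem pcount2_eq_weight [NeZero k] (h : HasTwoActiveSites σ τ) (n : ℕ) :
    pcount2 σ τ n = weight n 0 := by
  rw [pcount2_eq_card_completions]
  exact h.card_completions n (Nat.zero_add n) List.nodup_nil (by simp) listAvoids_nil listAvoids_nil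

end HasTwoActiveSites

/-! ### Inserting a maximum into a pattern-avoiding list -/

section lists

variable {α : Type*} {r : α → α → α → Prop} {w : List α} {a : α} {p : ℕ}

theorem insertIdx_eq_take_append_cons_drop (hp : p ≤ w.length) :
    w.insertIdx p a = w.take p ++ a :: w.drop p := by
  induction w generalizing p with
  | nil => simp [Nat.le_zero.1 hp]
  | cons x w ih =>
    cases p with
    | zero => rfl
    | succ p => simp [ih (Nat.succ_le_succ_iff.1 hp)]

theorem triplewise_iff_forall_sublist :
    w.Triplewise r ↔ ∀ a b c, [a, b, c].Sublist w → r a b c := by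
  induction w with
  | nil => simp
  | cons x w ih =>
    rw [List.triplewise_cons, ih, List.pairwise_iff_forall_sublist]
    grind

theorem pairwise_drop_iff_getElem {r : α → α → Prop} :
    (w.drop p).Pairwise r ↔ ∀ i j (_ : i < j) (_ : j < w.length), p ≤ i → r w[i] w[j] := by
  rw [List.pairwise_iff_getElem]
  constructor
  · intro h i j hij hj hi
    have := h (i - p) (j - p)
    grind
  · grind

theorem pairwise_take_iff_getElem {r : α → α → Prop} (hp : p ≤ w.length) :
    (w.take p).Pairwise r ↔ ∀ i j (_ : i < j) (_ : j < p), r w[i] w[j] := by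
  rw [List.pairwise_iff_getElem]
  grind

theorem forall_mem_take_forall_mem_drop_iff_getElem {r : α → α → Prop} (hp : p ≤ w.length) :
    (∀ x ∈ w.take p, ∀ y ∈ w.drop p, r x y) ↔
      ∀ i j (_ : i < p) (_ : j < w.length), p ≤ j → r w[i] w[j] := by
  simp only [List.forall_mem_iff_getElem, List.getElem_take, List.getElem_drop]
  constructor
  · intro h i j hi hj hpj
    have := h i (by grind) (j - p)
    grind
  · grind

theorem triplewise_insertIdx_iff (hp : p ≤ w.length) :
    (w.insertIdx p a).Triplewise r ↔ w.Triplewise r ∧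
      (∀ i j (_ : i < j) (_ : j < w.length), p ≤ i → r a w[i] w[j]) ∧
      (∀ i j (_ : i < p) (_ : j < w.length), p ≤ j → r w[i] a w[j]) ∧
      ∀ i j (_ : i < j) (_ : j < p), r w[i] w[j] a := by
  rw [← pairwise_drop_iff_getElem (r := r a), ← pairwise_take_iff_getElem (r := (r · · a)) hp,
    ← forall_mem_take_forall_mem_drop_iff_getElem (r := (r · a ·)) hp]
  nth_rw 2 [← List.take_append_drop p w]
  simp only [insertIdx_eq_take_append_cons_drop hp, List.triplewise_append, List.triplewise_cons,
    List.pairwise_cons, List.forall_mem_cons]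
  grind

end lists

section patterns

variable {w : List ℕ}

theorem listAvoids_iff_triplewise {τ : Equiv.Perm (Fin 3)} :
    ListAvoids τ w ↔ w.Triplewise fun a b c => ¬StrictMono fun i => ![a, b, c] (τ i).rev := by
  rw [triplewise_iff_forall_sublist]
  constructor
  · intro hw a b c hsub hmono
    exact hw ⟨_, hmono, by simpa [List.ofFn_succ] using hsub⟩
  · rintro h ⟨f, hf, hsub⟩
    refine h _ _ _ (by simpa only [List.ofFn_succ, List.ofFn_zero] using! hsub) ?_
    convert hf with i
    obtain ⟨j, rfl⟩ := τ.symm.surjective i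
    obtain ⟨j, rfl⟩ := Fin.rev_surjective j
    fin_cases j <;> simp

theorem listAvoids_p123_iff : ListAvoids p123 w ↔ w.Triplewise fun a b c => ¬(c < b ∧ b < a) := by
  simp [listAvoids_iff_triplewise, p123, Fin.strictMono_iff_lt_succ, Fin.forall_fin_two]

theorem listAvoids_p132_iff : ListAvoids p132 w ↔ w.Triplewise fun a b c => ¬(c < a ∧ a < b) := by
  simp [listAvoids_iff_triplewise, p132, Fin.strictMono_iff_lt_succ, Fin.forall_fin_two]

theorem listAvoids_p213_iff : ListAvoids p213 w ↔ w.Triplewise fun a b c => ¬(b < c ∧ c < a) := by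
  simp [listAvoids_iff_triplewise, p213, Fin.strictMono_iff_lt_succ, Fin.forall_fin_two]

theorem listAvoids_p231_iff : ListAvoids p231 w ↔ w.Triplewise fun a b c => ¬(b < a ∧ a < c) := by
  simp [listAvoids_iff_triplewise, p231, Fin.strictMono_iff_lt_succ, Fin.forall_fin_two]

theorem listAvoids_p312_iff : ListAvoids p312 w ↔ w.Triplewise fun a b c => ¬(a < c ∧ c < b) := by
  simp [listAvoids_iff_triplewise, p312, Fin.strictMono_iff_lt_succ, Fin.forall_fin_two]

theorem listAvoids_p321_iff : ListAvoids p321 w ↔ w.Triplewise fun a b c => ¬(a < b ∧ b < c) := by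
  simp [listAvoids_iff_triplewise, p321, Fin.strictMono_iff_lt_succ, Fin.forall_fin_two]

variable {a p : ℕ}

theorem ListAvoids.p123_insertIdx_iff (hw : ListAvoids p123 w) (hp : p ≤ w.length)
    (ha : ∀ x ∈ w, x < a) : ListAvoids p123 (w.insertIdx p a) ↔
      ∀ i j (_ : i < j) (_ : j < w.length), p ≤ i → w[i] ≤ w[j] := by
  rw [listAvoids_p123_iff] at hw ⊢
  have hlt (i : ℕ) (hi : i < w.length) : w[i] < a := ha _ (List.getElem_mem hi)
  rw [triplewise_insertIdx_iff hp]
  grind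

theorem ListAvoids.p213_insertIdx_iff (hw : ListAvoids p213 w) (hp : p ≤ w.length)
    (ha : ∀ x ∈ w, x < a) : ListAvoids p213 (w.insertIdx p a) ↔
      ∀ i j (_ : i < j) (_ : j < w.length), p ≤ i → w[j] ≤ w[i] := by
  rw [listAvoids_p213_iff] at hw ⊢
  have hlt (i : ℕ) (hi : i < w.length) : w[i] < a := ha _ (List.getElem_mem hi)
  rw [triplewise_insertIdx_iff hp]
  grind

theorem ListAvoids.p231_insertIdx_iff (hw : ListAvoids p231 w) (hp : p ≤ w.length)
    (ha : ∀ x ∈ w, x < a) : ListAvoids p231 (w.insertIdx p a) ↔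
      ∀ i j (_ : i < j) (_ : j < p), w[i] ≤ w[j] := by
  rw [listAvoids_p231_iff] at hw ⊢
  have hlt (i : ℕ) (hi : i < w.length) : w[i] < a := ha _ (List.getElem_mem hi)
  rw [triplewise_insertIdx_iff hp]
  grind

theorem ListAvoids.p321_insertIdx_iff (hw : ListAvoids p321 w) (hp : p ≤ w.length)
    (ha : ∀ x ∈ w, x < a) : ListAvoids p321 (w.insertIdx p a) ↔
      ∀ i j (_ : i < j) (_ : j < p), w[j] ≤ w[i] := by
  rw [listAvoids_p321_iff] at hw ⊢
  have hlt (i : ℕ) (hi : i < w.length) : w[i] < a := ha _ (List.getElem_mem hi)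
  rw [triplewise_insertIdx_iff hp]
  grind

theorem ListAvoids.p132_insertIdx_iff (hw : ListAvoids p132 w) (hp : p ≤ w.length)
    (ha : ∀ x ∈ w, x < a) : ListAvoids p132 (w.insertIdx p a) ↔
      ∀ i j (_ : i < p) (_ : j < w.length), p ≤ j → w[i] ≤ w[j] := by
  rw [listAvoids_p132_iff] at hw ⊢
  have hlt (i : ℕ) (hi : i < w.length) : w[i] < a := ha _ (List.getElem_mem hi)
  rw [triplewise_insertIdx_iff hp]
  grind

theorem ListAvoids.p312_insertIdx_iff (hw : ListAvoids p312 w) (hp : p ≤ w.length)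
    (ha : ∀ x ∈ w, x < a) : ListAvoids p312 (w.insertIdx p a) ↔
      ∀ i j (_ : i < p) (_ : j < w.length), p ≤ j → w[j] ≤ w[i] := by
  rw [listAvoids_p312_iff] at hw ⊢
  have hlt (i : ℕ) (hi : i < w.length) : w[i] < a := ha _ (List.getElem_mem hi)
  rw [triplewise_insertIdx_iff hp]
  grind

end patterns

theorem hasTwoActiveSites_of_exists {σ τ : Equiv.Perm (Fin 3)}
    (h : ∀ (w : List ℕ) (a : ℕ), w ≠ [] → w.Nodup → (∀ x ∈ w, x < a) → ListAvoids σ w →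
      ListAvoids τ w → ∃ i j, i < j ∧ j ≤ w.length ∧ ∀ p ≤ w.length,
        ListAvoids σ (w.insertIdx p a) ∧ ListAvoids τ (w.insertIdx p a) ↔ p = i ∨ p = j) :
    HasTwoActiveSites σ τ := by
  classical
  intro w a hw ha hσ hτ
  rcases eq_or_ne w [] with rfl | hne
  · rw [activeSites, filter_true_of_mem]
    · rfl
    · simp [listAvoids_iff_triplewise]
  · obtain ⟨i, j, hij, hj, hp⟩ := h w a hne hw ha hσ hτ
    have hsites : activeSites σ τ w a = {i, j} := by
      ext p
      simp only [activeSites, mem_filter, mem_range, mem_insert, mem_singleton]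
      grind
    obtain ⟨m, hm⟩ := Nat.exists_eq_add_one_of_ne_zero (List.length_pos_of_ne_nil hne).ne'
    rw [hsites, card_pair hij.ne, hm]
    rfl

theorem exists_forall_lt_of_nodup {w : List ℕ} (hne : w ≠ []) (hw : w.Nodup) :
    ∃ i, ∃ hi : i < w.length, ∀ j (hj : j < w.length), j ≠ i → w[j] < w[i] := by
  obtain ⟨i, hi, hmax⟩ := List.getElem_of_mem (List.max_mem hne)
  refine ⟨i, hi, fun j hj hji => ?_⟩
  refine lt_of_le_of_ne ?_ fun h => hji (hw.getElem_inj_iff.1 h)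
  exact hmax ▸ List.le_max_of_mem (List.getElem_mem hj)

theorem hasTwoActiveSites_p123_p213 : HasTwoActiveSites p123 p213 := by
  refine hasTwoActiveSites_of_exists fun w a hne hw ha h123 h213 =>
    have hpos := List.length_pos_of_ne_nil hne
    ⟨w.length - 1, w.length, by omega, le_rfl, fun p hp => ?_⟩
  rw [h123.p123_insertIdx_iff hp ha, h213.p213_insertIdx_iff hp ha]
  constructor
  · rintro ⟨hmono, hanti⟩
    by_contra! hne
    have heq := (hmono p (p + 1) p.lt_succ_self (by omega) le_rfl).antisymm
      (hanti p (p + 1) p.lt_succ_self (by omega) le_rfl)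
    exact p.lt_succ_self.ne (hw.getElem_inj_iff.1 heq)
  · grind

theorem hasTwoActiveSites_p132_p312 : HasTwoActiveSites p132 p312 := by
  refine hasTwoActiveSites_of_exists fun w a hne hw ha h132 h312 =>
    ⟨0, w.length, List.length_pos_of_ne_nil hne, le_rfl, fun p hp => ?_⟩
  rw [h132.p132_insertIdx_iff hp ha, h312.p312_insertIdx_iff hp ha]
  constructor
  · rintro ⟨hle, hge⟩
    by_contra! hne
    have heq := (hle 0 p (by omega) (by omega) le_rfl).antisymm
      (hge 0 p (by omega) (by omega) le_rfl)
    exact hne.1.symm (hw.getElem_inj_iff.1 heq)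
  · grind

theorem hasTwoActiveSites_p231_p321 : HasTwoActiveSites p231 p321 := by
  refine hasTwoActiveSites_of_exists fun w a hne hw ha h231 h321 =>
    ⟨0, 1, zero_lt_one, List.length_pos_of_ne_nil hne, fun p hp => ?_⟩
  rw [h231.p231_insertIdx_iff hp ha, h321.p321_insertIdx_iff hp ha]
  constructor
  · rintro ⟨hmono, hanti⟩
    by_contra! hne
    have heq := (hmono 0 1 zero_lt_one (by omega)).antisymm (hanti 0 1 zero_lt_one (by omega))
    exact zero_ne_one (hw.getElem_inj_iff.1 heq)
  · grind

theorem hasTwoActiveSites_p132_p213 : HasTwoActiveSites p132 p213 := by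
  refine hasTwoActiveSites_of_exists fun w a hne hw ha h132 h213 => ?_
  obtain ⟨q, hq, hmax⟩ := exists_forall_lt_of_nodup hne hw
  refine ⟨q, w.length, hq, le_rfl, fun p hp => ?_⟩
  rw [h132.p132_insertIdx_iff hp ha, h213.p213_insertIdx_iff hp ha]
  rw [listAvoids_p132_iff, List.triplewise_iff_getElem] at h132
  rw [listAvoids_p213_iff, List.triplewise_iff_getElem] at h213
  constructor
  · rintro ⟨hle, hanti⟩
    have := hle q p
    have := hanti p q
    grind
  · refine fun hpq => ⟨fun i j hi hj hpj => ?_, fun i j hij hj hi => ?_⟩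
    · have := h132 i q j
      grind
    · have := h213 q i j
      grind

theorem hasTwoActiveSites_p213_p231 : HasTwoActiveSites p213 p231 := by
  refine hasTwoActiveSites_of_exists fun w a hne hw ha h213 h231 => ?_
  obtain ⟨q, hq, hmax⟩ := exists_forall_lt_of_nodup hne hw
  refine ⟨q, q + 1, q.lt_succ_self, hq, fun p hp => ?_⟩
  rw [h213.p213_insertIdx_iff hp ha, h231.p231_insertIdx_iff hp ha]
  rw [listAvoids_p213_iff, List.triplewise_iff_getElem] at h213
  rw [listAvoids_p231_iff, List.triplewise_iff_getElem] at h231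
  constructor
  · rintro ⟨hanti, hmono⟩
    have := hanti p q
    have := hmono q (p - 1)
    grind
  · refine fun hpq => ⟨fun i j hij hj hi => ?_, fun i j hij hj => ?_⟩
    · have := h213 q i j
      grind
    · have := h231 i j q
      grind

theorem hasTwoActiveSites_p231_p312 : HasTwoActiveSites p231 p312 := by
  refine hasTwoActiveSites_of_exists fun w a hne hw ha h231 h312 => ?_
  obtain ⟨q, hq, hmax⟩ := exists_forall_lt_of_nodup hne hw
  refine ⟨0, q + 1, q.succ_pos, hq, fun p hp => ?_⟩
  rw [h231.p231_insertIdx_iff hp ha, h312.p312_insertIdx_iff hp ha]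
  rw [listAvoids_p231_iff, List.triplewise_iff_getElem] at h231
  rw [listAvoids_p312_iff, List.triplewise_iff_getElem] at h312
  constructor
  · rintro ⟨hmono, hge⟩
    have := hmono q (p - 1)
    have := hge 0 q
    grind
  · refine fun hpq => ⟨fun i j hij hj => ?_, fun i j hi hj hpj => ?_⟩
    · have := h231 i j q
      grind
    · have := h312 i q j
      grind

theorem p231_inv : p231⁻¹ = p312 := by decide

theorem p312_inv : p312⁻¹ = p231 := by decide

theorem p132_inv : p132⁻¹ = p132 := by decide

theorem p213_inv : p213⁻¹ = p213 := by decide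

theorem p321_inv : p321⁻¹ = p321 := by decide

theorem ClassIPair.pcount2_eq_weight {σ τ : Equiv.Perm (Fin 3)} (h : ClassIPair σ τ) (n : ℕ) :
    pcount2 σ τ n = weight n 0 := by
  rcases h with ⟨rfl, rfl⟩ | ⟨rfl, rfl⟩ | ⟨rfl, rfl⟩ | ⟨rfl, rfl⟩ | ⟨rfl, rfl⟩ | ⟨rfl, rfl⟩ |
    ⟨rfl, rfl⟩ | ⟨rfl, rfl⟩ | ⟨rfl, rfl⟩
  · exact hasTwoActiveSites_p123_p213.pcount2_eq_weight n
  · exact hasTwoActiveSites_p132_p213.pcount2_eq_weight n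
  · rw [← pcount2_inv, p132_inv, p231_inv]
    exact hasTwoActiveSites_p132_p312.pcount2_eq_weight n
  · exact hasTwoActiveSites_p132_p312.pcount2_eq_weight n
  · exact hasTwoActiveSites_p213_p231.pcount2_eq_weight n
  · rw [← pcount2_inv, p213_inv, p312_inv]
    exact hasTwoActiveSites_p213_p231.pcount2_eq_weight n
  · exact hasTwoActiveSites_p231_p312.pcount2_eq_weight n
  · exact hasTwoActiveSites_p231_p321.pcount2_eq_weight n
  · rw [← pcount2_inv, p312_inv, p321_inv]
    exact hasTwoActiveSites_p231_p321.pcount2_eq_weight n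

/-! ### The generating function -/

section PowerSeries

open PowerSeries

theorem exists_powerSeries_eq_X_mul : ∃ y : ℚ⟦X⟧, y = X * (1 + y) * (1 + 2 * y) := by
  set S := largeSchroderSeries.map (Nat.castRingHom ℚ) with hS
  have hSchroder : S = 1 + X * S + X * S ^ 2 := by
    conv_lhs => rw [hS,
      largeSchroderSeries_eq_one_add_X_mul_largeSchroderSeries_add_X_mul_largeSchroderSeries_sq]
    simp [hS]
  have hhalf : 2 * C (1 / 2 : ℚ) = 1 := by
    rw [← map_ofNat C 2, ← map_mul, mul_one_div_cancel two_ne_zero, map_one]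
  refine ⟨C (1 / 2) * (S - 1), ?_⟩
  linear_combination C (1 / 2) * hSchroder +
    X * (S - (1 + C (1 / 2) * (S - 1)) * (S - 1)) * hhalf

theorem coeff_eq_weight {V : ℕ → ℚ⟦X⟧} (h0 : V 0 = 1 + X * (V 0 + V 1))
    (h1 : V 1 = X * (V 1 + 2 * V 2 + (V 0 + V 1)))
    (h2 : ∀ m, V (m + 2) = X * (V (m + 2) + 2 * V (m + 3) + (V (m + 1) + 2 * V (m + 2))))
    (n m : ℕ) : coeff n (V m) = weight n m := by
  induction n generalizing m with
  | zero =>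
    match m with
    | 0 => rw [h0]; simp [weight]
    | 1 => rw [h1]; simp [weight]
    | m + 2 => rw [h2]; simp [weight]
  | succ n ih =>
    have hcoeff_two_mul (m : ℕ) : coeff n (2 * V m) = 2 * coeff n (V m) := by
      rw [← map_ofNat (C (R := ℚ)) 2, coeff_C_mul]
    match m with
    | 0 => rw [h0, map_add, coeff_succ_X_mul]; simp [weight, siteCount, ih, coeff_one]
    | 1 => rw [h1, coeff_succ_X_mul]; simp [weight, siteCount, ih, hcoeff_two_mul]
    | m + 2 => rw [h2, coeff_succ_X_mul]; simp [weight, siteCount, ih, hcoeff_two_mul]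

theorem gf_weight_of_eq_X_mul {y : ℚ⟦X⟧} (hy : y = X * (1 + y) * (1 + 2 * y)) :
    (1 - 3 * X + 3 * X ^ 2) * (PowerSeries.mk fun n => (weight n 0 : ℚ)) =
      1 - 2 * X + 2 * X ^ 2 + 2 * X ^ 2 * y := by
  set Q : ℚ⟦X⟧ := (1 - X) * (1 - 2 * X - 2 * X * y) - X ^ 2 with hQ
  have hQinv : Q * Q⁻¹ = 1 := PowerSeries.mul_inv_cancel Q (by simp [hQ])
  -- Given the recursion for `weight`, the ansatz `V (m + 1) = y ^ m * V 1` satisfies the equations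
  -- for `V (m + 2)` and leaves a linear system of determinant `Q` for `V 0` and `V 1`.
  let V : ℕ → ℚ⟦X⟧
    | 0 => (1 - 2 * X - 2 * X * y) * Q⁻¹
    | m + 1 => y ^ m * (X * Q⁻¹)
  have hV : (PowerSeries.mk fun n => (weight n 0 : ℚ)) = V 0 := by
    ext n
    rw [coeff_mk]
    refine (coeff_eq_weight (V := V) ?_ ?_ ?_ n 0).symm
    · simp only [V]
      linear_combination hQinv - Q⁻¹ * hQ
    · simp only [V]; ring
    · intro m
      simp only [V]
      linear_combination y ^ m * (X * Q⁻¹) * hy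
  have hnum : (1 - 3 * X + 3 * X ^ 2) * (1 - 2 * X - 2 * X * y) =
      (1 - 2 * X + 2 * X ^ 2 + 2 * X ^ 2 * y) * Q := by
    rw [hQ]
    linear_combination -(2 * X ^ 2 * (1 - X)) * hy
  rw [hV]
  linear_combination Q⁻¹ * hnum + (1 - 2 * X + 2 * X ^ 2 + 2 * X ^ 2 * y) * hQinv

theorem gf_weight : (2 * (1 - 3 * X + 3 * X ^ 2) * (PowerSeries.mk fun n => (weight n 0 : ℚ)) -
      (2 - 3 * X + X ^ 2)) ^ 2 = X ^ 2 * (1 - 6 * X + X ^ 2) := by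
  obtain ⟨y, hy⟩ := exists_powerSeries_eq_X_mul
  have hB : 2 * (1 - 3 * X + 3 * X ^ 2) * (PowerSeries.mk fun n => (weight n 0 : ℚ)) -
      (2 - 3 * X + X ^ 2) = -X * (1 - 3 * X - 4 * X * y) := by
    linear_combination 2 * gf_weight_of_eq_X_mul hy
  rw [hB]
  linear_combination (-8 * X ^ 3) * hy

end PowerSeries

/-- For every pair `{σ,τ}` in class I, the generating function
`B(z) = Σ_{n≥0}|P_n(σ,τ)| zⁿ` satisfies
`(2(1−3z+3z²)B − (2−3z+z²))² = z²(1−6z+z²)`, i.e.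
`B(z) = (2−3z+z² − z√(1−6z+z²)) / (2(1−3z+3z²))`. -/
theorem gf_partitions_classI
    (σ τ : Equiv.Perm (Fin 3)) (h : ClassIPair σ τ) :
    (2 * (1 - 3 * PowerSeries.X + 3 * PowerSeries.X ^ 2) *
          (PowerSeries.mk fun n => (pcount2 σ τ n : ℚ)) -
        (2 - 3 * PowerSeries.X + PowerSeries.X ^ 2)) ^ 2 =
      PowerSeries.X ^ 2 * (1 - 6 * PowerSeries.X + PowerSeries.X ^ 2) := by
  simp only [h.pcount2_eq_weight]
  exact gf_weight
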